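/- arXiv:0911.3875 — 2 statements merged into one kernel-verified Lean document; each statement's English description precedes it below -/
import Mathlib

section
/- (Noncommutative root space Poisson-type bracket algebra, identity (6).) Define bilinear mappings on ℰ by K₊(φ, ψ) = −i·φ ˆ (D₁ ψ), K₋(φ, ψ) = i·ψ ˆ (D₁ φ), and K₀₀(φ, ψ) = K₊(φ, ψ) + K₋(φ, ψ) on nonempty words. Then for all words φ, ψ over E of tensor order at least 2 and every nonempty word χ over E: K₊(K₀₀(φ, ψ), χ) = K₊(φ, K₊(ψ, χ)) − K₊(ψ, K₊(φ, χ)), and the same identity with K₊ replaced by K₋ throughout. -/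
/-- The gluing (concatenation) operation on words over `E`:
`(xs ++ [a]) ˆ (b :: ys) = xs ++ [a * b] ++ ys`. -/
def glue {E : Type*} [Mul E] : List E → List E → List E
  | [], ys => ys
  | [a], [] => [a]
  | [a], b :: ys => (a * b) :: ys
  | a :: b :: as, ys => a :: glue (b :: as) ys

/-- `applyAt f k w` applies `f` to the `k`-th (1-based) entry of the word `w`. -/
def applyAt {E : Type*} (f : E → E) : ℕ → List E → List E
  | _, [] => []
  | 0, w => w
  | 1, a :: as => f a :: as
  | k+2, a :: as => a :: applyAt f (k+1) as

/-- The basis element of the root space `ℰ` (the monoid algebra of the free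
monoid on `E` over `ℂ`) corresponding to the word `w`, representing the
pure tensor `w₁ ⊗ ⋯ ⊗ w_N`. -/
noncomputable def bw {E : Type*} (w : List E) : MonoidAlgebra ℂ (FreeMonoid E) :=
  MonoidAlgebra.single (FreeMonoid.ofList w) 1

theorem glue_ne_nil {E : Type*} [Mul E] : ∀ (a b : List E), a ≠ [] → glue a b ≠ []
  | [], _, h => absurd rfl h
  | [_], [], _ => by simp [glue]
  | [_], _ :: _, _ => by simp [glue]
  | _ :: _ :: _, _, _ => by simp [glue]

theorem glue_assoc {E : Type*} [Semigroup E] : ∀ (a b c : List E), b ≠ [] →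
    glue (glue a b) c = glue a (glue b c)
  | [], b, c, _ => by simp [glue]
  | [x], [], c, h => absurd rfl h
  | [x], [y], [], _ => by simp [glue]
  | [x], [y], z :: c, _ => by simp [glue, mul_assoc]
  | [x], y :: y' :: b, c, _ => by simp [glue]
  | x :: x' :: a, b, c, h => by
    have ih := glue_assoc (x' :: a) b c h
    have hn := glue_ne_nil (x' :: a) b (by simp)
    rw [glue, glue, ← ih]
    obtain ⟨u, v, huv⟩ := List.exists_cons_of_ne_nil hn
    rw [huv, glue]

theorem applyAt_one_ne_nil {E : Type*} (f : E → E) (a : List E) (h : a ≠ []) :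
    applyAt f 1 a ≠ [] := by
  cases a with
  | nil => exact absurd rfl h
  | cons x a => simp [applyAt]

theorem applyAt_glue {E : Type*} [Mul E] (f : E → E) (a b : List E) (h : 2 ≤ a.length) :
    applyAt f 1 (glue a b) = glue (applyAt f 1 a) b := by
  match a, h with
  | x :: y :: a, _ => simp [applyAt, glue]

/-- the noncommutative root space Poisson-type bracket algebra,
identity (6). On nonempty basis words: `K₊(φ, ψ) = −i·φ ˆ (D₁ ψ)`,
`K₋(φ, ψ) = i·ψ ˆ (D₁ φ)`, `K₀₀(φ, ψ) = K₊(φ, ψ) + K₋(φ, ψ)`. -/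
theorem ncrs_poisson_type_6
    (E : Type*) [Ring E] [Algebra ℂ E] (d : E →ₗ[ℂ] E)
    (Kp Km K00 : MonoidAlgebra ℂ (FreeMonoid E) →ₗ[ℂ]
         MonoidAlgebra ℂ (FreeMonoid E) →ₗ[ℂ] MonoidAlgebra ℂ (FreeMonoid E))
    (hp : ∀ φ ψ : List E, φ ≠ [] → ψ ≠ [] →
      Kp (bw φ) (bw ψ) = (-Complex.I) • bw (glue φ (applyAt (⇑d) 1 ψ)))
    (hm : ∀ φ ψ : List E, φ ≠ [] → ψ ≠ [] →
      Km (bw φ) (bw ψ) = Complex.I • bw (glue ψ (applyAt (⇑d) 1 φ)))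
    (h00 : ∀ φ ψ : List E, φ ≠ [] → ψ ≠ [] →
      K00 (bw φ) (bw ψ) = Kp (bw φ) (bw ψ) + Km (bw φ) (bw ψ))
    (hz : ∀ x, Kp (bw ([] : List E)) x = 0 ∧ Kp x (bw ([] : List E)) = 0 ∧
               Km (bw ([] : List E)) x = 0 ∧ Km x (bw ([] : List E)) = 0 ∧
               K00 (bw ([] : List E)) x = 0 ∧ K00 x (bw ([] : List E)) = 0) :
    ∀ φ ψ χ : List E, 2 ≤ φ.length → 2 ≤ ψ.length → χ ≠ [] →
      Kp (K00 (bw φ) (bw ψ)) (bw χ) =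
        Kp (bw φ) (Kp (bw ψ) (bw χ)) - Kp (bw ψ) (Kp (bw φ) (bw χ)) ∧
      Km (K00 (bw φ) (bw ψ)) (bw χ) =
        Km (bw φ) (Km (bw ψ) (bw χ)) - Km (bw ψ) (Km (bw φ) (bw χ)) := by
  intro φ ψ χ hφ hψ hχ
  have nφ : φ ≠ [] := by rintro rfl; simp at hφ
  have nψ : ψ ≠ [] := by rintro rfl; simp at hψ
  have dφ := applyAt_one_ne_nil d φ nφ
  have dψ := applyAt_one_ne_nil d ψ nψ
  rw [h00 φ ψ nφ nψ, hp φ ψ nφ nψ, hm φ ψ nφ nψ, hp ψ χ nψ hχ, hp φ χ nφ hχ, hm ψ χ nψ hχ,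
    hm φ χ nφ hχ]
  simp only [map_add, map_smul, LinearMap.add_apply, LinearMap.smul_apply]
  rw [hp _ χ (glue_ne_nil _ _ nφ) hχ, hp _ χ (glue_ne_nil _ _ nψ) hχ,
    hm _ χ (glue_ne_nil _ _ nφ) hχ, hm _ χ (glue_ne_nil _ _ nψ) hχ,
    hp φ _ nφ (glue_ne_nil _ _ nψ), hp ψ _ nψ (glue_ne_nil _ _ nφ),
    hm φ _ nφ (glue_ne_nil _ _ hχ), hm ψ _ nψ (glue_ne_nil _ _ hχ),
    applyAt_glue _ _ _ hφ, applyAt_glue _ _ _ hψ, applyAt_glue _ _ _ hφ, applyAt_glue _ _ _ hψ,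
    glue_assoc _ _ _ dφ, glue_assoc _ _ _ dψ, glue_assoc _ _ _ dφ, glue_assoc _ _ _ dψ]
  simp only [smul_smul, neg_mul, mul_neg, Complex.I_mul_I, neg_neg, neg_smul, one_smul]
  constructor <;> abel
end

section
/- (Noncommutative root space Poisson-type bracket algebra, identity (7).) Define bilinear mappings on ℰ by K₀(φ, ψ) = −i·D_{ord φ}(φ ˆ ψ), K₊(φ, ψ) = −i·φ ˆ (D₁ ψ), K₋(φ, ψ) = i·ψ ˆ (D₁ φ), and K₀₀(φ, ψ) = K₊(φ, ψ) + K₋(φ, ψ) on nonempty words. Then for all words φ, χ over E of tensor order at least 2 and every nonempty word ψ over E: K₀₀(ψ, K₀(φ, χ)) = K₀(K₊(ψ, φ), χ) + K₀(φ, K₋(ψ, χ)) in ℰ. -/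
theorem glue_app {E : Type*} [Mul E] (xs : List E) (a b : E) (ys : List E) :
    glue (xs ++ [a]) (b :: ys) = xs ++ (a * b) :: ys := by
  induction xs with
  | nil => simp [glue]
  | cons x xs ih =>
    cases xs with
    | nil => simp [glue]
    | cons y xs => simpa [glue] using ih

theorem applyAt_app {E : Type*} (f : E → E) (xs : List E) (a : E) (ys : List E) (n : ℕ)
    (hn : n = xs.length + 1) :
    applyAt f n (xs ++ a :: ys) = xs ++ f a :: ys := by
  subst hn
  induction xs with
  | nil => simp [applyAt]
  | cons x xs ih => simpa [applyAt] using ih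

/-- the noncommutative root space Poisson-type bracket algebra,
identity (7). On nonempty basis words: `K₀(φ, ψ) = −i·D_{ord φ}(φ ˆ ψ)`,
`K₊(φ, ψ) = −i·φ ˆ (D₁ ψ)`, `K₋(φ, ψ) = i·ψ ˆ (D₁ φ)`,
`K₀₀(φ, ψ) = K₊(φ, ψ) + K₋(φ, ψ)`. -/
theorem ncrs_poisson_type_7
    (E : Type*) [Ring E] [Algebra ℂ E] (d : E →ₗ[ℂ] E)
    (K0 Kp Km K00 : MonoidAlgebra ℂ (FreeMonoid E) →ₗ[ℂ]
         MonoidAlgebra ℂ (FreeMonoid E) →ₗ[ℂ] MonoidAlgebra ℂ (FreeMonoid E))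
    (h0 : ∀ φ ψ : List E, φ ≠ [] → ψ ≠ [] →
      K0 (bw φ) (bw ψ) = (-Complex.I) • bw (applyAt (⇑d) φ.length (glue φ ψ)))
    (hp : ∀ φ ψ : List E, φ ≠ [] → ψ ≠ [] →
      Kp (bw φ) (bw ψ) = (-Complex.I) • bw (glue φ (applyAt (⇑d) 1 ψ)))
    (hm : ∀ φ ψ : List E, φ ≠ [] → ψ ≠ [] →
      Km (bw φ) (bw ψ) = Complex.I • bw (glue ψ (applyAt (⇑d) 1 φ)))
    (h00 : ∀ φ ψ : List E, φ ≠ [] → ψ ≠ [] →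
      K00 (bw φ) (bw ψ) = Kp (bw φ) (bw ψ) + Km (bw φ) (bw ψ))
    (hz : ∀ x, K0 (bw ([] : List E)) x = 0 ∧ K0 x (bw ([] : List E)) = 0 ∧
               Kp (bw ([] : List E)) x = 0 ∧ Kp x (bw ([] : List E)) = 0 ∧
               Km (bw ([] : List E)) x = 0 ∧ Km x (bw ([] : List E)) = 0 ∧
               K00 (bw ([] : List E)) x = 0 ∧ K00 x (bw ([] : List E)) = 0) :
    ∀ φ ψ χ : List E, 2 ≤ φ.length → ψ ≠ [] → 2 ≤ χ.length →
      K00 (bw ψ) (K0 (bw φ) (bw χ)) =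
        K0 (Kp (bw ψ) (bw φ)) (bw χ) + K0 (bw φ) (Km (bw ψ) (bw χ)) := by
  intro φ ψ χ hφ hψ hχ
  obtain ⟨a, xs, p, rfl⟩ : ∃ a xs p, φ = a :: (xs ++ [p]) := by
    match φ, hφ with
    | a :: b :: l, _ =>
      exact ⟨a, (b :: l).dropLast, (b :: l).getLast (by simp), by
        rw [List.dropLast_append_getLast]⟩
  obtain ⟨q, ys, r, rfl⟩ : ∃ a xs p, χ = a :: (xs ++ [p]) := by
    match χ, hχ with
    | a :: b :: l, _ =>
      exact ⟨a, (b :: l).dropLast, (b :: l).getLast (by simp), by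
        rw [List.dropLast_append_getLast]⟩
  obtain ⟨us, s, hs⟩ : ∃ us s, ψ = us ++ [s] :=
    ⟨ψ.dropLast, ψ.getLast hψ, (List.dropLast_append_getLast hψ).symm⟩
  obtain ⟨v, vs, hv⟩ : ∃ v vs, applyAt (⇑d) 1 ψ = v :: vs := by
    match ψ, hψ with
    | t :: ts, _ => exact ⟨d t, ts, by simp [applyAt]⟩
  have g1 : applyAt (⇑d) (a :: (xs ++ [p])).length (glue (a :: (xs ++ [p])) (q :: (ys ++ [r])))
      = a :: (xs ++ d (p * q) :: (ys ++ [r])) := by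
    have h := glue_app (a :: xs) p q (ys ++ [r])
    have h' := applyAt_app (⇑d) (a :: xs) (p * q) (ys ++ [r]) (a :: (xs ++ [p])).length (by simp)
    simp only [List.cons_append] at h h'
    rw [h, h']
  have g2 : glue ψ (applyAt (⇑d) 1 (a :: (xs ++ d (p * q) :: (ys ++ [r]))))
      = us ++ (s * d a) :: (xs ++ d (p * q) :: (ys ++ [r])) := by
    rw [hs, applyAt, glue_app]
  have g3 : glue (a :: (xs ++ d (p * q) :: (ys ++ [r]))) (applyAt (⇑d) 1 ψ)
      = a :: (xs ++ d (p * q) :: (ys ++ (r * v) :: vs)) := by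
    have h := glue_app (a :: (xs ++ d (p * q) :: ys)) r v vs
    simp only [List.cons_append, List.append_assoc] at h
    rw [hv, h]
  have g4 : glue ψ (applyAt (⇑d) 1 (a :: (xs ++ [p]))) = us ++ (s * d a) :: (xs ++ [p]) := by
    rw [hs, applyAt, glue_app]
  have g5 : applyAt (⇑d) (us ++ (s * d a) :: (xs ++ [p])).length
      (glue (us ++ (s * d a) :: (xs ++ [p])) (q :: (ys ++ [r])))
      = us ++ (s * d a) :: (xs ++ d (p * q) :: (ys ++ [r])) := by
    have h := glue_app (us ++ (s * d a) :: xs) p q (ys ++ [r])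
    have h' := applyAt_app (⇑d) (us ++ (s * d a) :: xs) (p * q) (ys ++ [r])
      (us ++ (s * d a) :: (xs ++ [p])).length (by simp; omega)
    simp only [List.cons_append, List.append_assoc] at h h'
    rw [h, h']
  have g6 : glue (q :: (ys ++ [r])) (applyAt (⇑d) 1 ψ) = q :: (ys ++ (r * v) :: vs) := by
    have h := glue_app (q :: ys) r v vs
    simp only [List.cons_append] at h
    rw [hv, h]
  have g7 : applyAt (⇑d) (a :: (xs ++ [p])).length
      (glue (a :: (xs ++ [p])) (q :: (ys ++ (r * v) :: vs)))
      = a :: (xs ++ d (p * q) :: (ys ++ (r * v) :: vs)) := by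
    have h := glue_app (a :: xs) p q (ys ++ (r * v) :: vs)
    have h' := applyAt_app (⇑d) (a :: xs) (p * q) (ys ++ (r * v) :: vs)
      (a :: (xs ++ [p])).length (by simp)
    simp only [List.cons_append] at h h'
    rw [h, h']
  rw [h0 _ _ (by simp) (by simp), g1, map_smul, h00 _ _ hψ (by simp), hp _ _ hψ (by simp),
    hm _ _ hψ (by simp), g2, g3, hp _ _ hψ (by simp), g4, hm _ _ hψ (by simp), g6,
    map_smul, map_smul, LinearMap.smul_apply, h0 _ _ (by simp) (by simp), g5,
    h0 _ _ (by simp) (by simp), g7, smul_add]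
  congr 1
  exact smul_comm _ _ _
end
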